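/- Let n ≥ 2 and let p > 1, q > 1 satisfy 4q − (n−1)pq + n + 3 > 0. Let f₁, g₁, f₂, g₂ ∈ C_c^∞(ℝⁿ) with ∫_{ℝⁿ} g₁(x) dx > 0 and ∫_{ℝⁿ} g₂(x) dx > 0, and let ε > 0. Then there exists no pair (u, v) of C² functions on [0,∞) × ℝⁿ satisfying ∂_t²u − Δu = |v|^p and ∂_t²v − Δv = |u|^q + |∂_t u|^{(n+1)/(n−1)} pointwise on (0,∞) × ℝⁿ, with u(0,·) = εf₁, ∂_t u(0,·) = εg₁, v(0,·) = εf₂, ∂_t v(0,·) = εg₂, and such that u, v, ∂_t u, ∂_t v are supported in {(t,x) : |x| ≤ t + 1}. -/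

import Mathlib

/-!
Let `U(t) = ∫ u(t, x) dx` and `V(t) = ∫ v(t, x) dx`. Integrating the equations in `x` gives
`U'' = ∫ |v|^p` and `V'' = ∫ |u|^q + ∫ |∂_t u|^r` with `r = (n + 1) / (n - 1)`, and Hölder's
inequality on the ball containing the support turns these into `U'' ≳ t^{-n(p-1)} |V|^p` and
`V'' ≳ t^{-n(q-1)} |U|^q`.

The derivative nonlinearity supplies the initial growth `V'' ≳ t^{(n-1)(1-r/2)}`. As `□u ≥ 0`, the
flux `∫ (∂_t u ψ - u ∂_t ψ) dx` is nondecreasing for every nonnegative `ψ` with `□ψ = 0`. For a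
unit vector `θ` and a smooth step function `h`, add the fluxes up to time `T` against the outgoing
wave `h(⟨θ, x⟩ - t)` and its reflection, the incoming wave `h(⟨θ, x⟩ + t - 2T)`. At time `T` the
terms containing `u` cancel, and at time `0` only `∫ ∂_t u(0)` is left, so
`∫ ∂_t u(0) ≤ 2 ∫ ∂_t u(T) h(⟨θ, x⟩ - T)`. The integrand lives in the shell `|x| = T + O(1)`, each
point of which contributes only for `θ` in a cap of measure `O(T^{-(n-1)/2})`. Averaging over `θ`
yields `∫_{shell} |∂_t u(T)| ≳ T^{(n-1)/2}`, and Hölder's inequality on the shell, of volume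
`O(T^{n-1})`, gives the claim.

Under the hypothesis on the exponents, each passage through the two differential inequalities
raises the power of `t` below `V` by a fixed amount. Hence `U` and `V` outgrow every power, the
weights can be absorbed, and `Z = U + V` satisfies `Z'' ≳ Z^s` for some `s > 1`, which is
impossible for all time (Kato's lemma).
-/

open MeasureTheory Real ENNReal FourierTransform
open scoped ContDiff

noncomputable section

/-- Euclidean space ℝⁿ. -/
abbrev Spc (n : ℕ) := EuclideanSpace ℝ (Fin n)

/-- Space-time ℝ × ℝⁿ. -/
abbrev STn (n : ℕ) := ℝ × Spc n

variable {n : ℕ}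

/-- Directional derivative in the space-time direction `v`. -/
def dirD (v : STn n) (f : STn n → ℝ) : STn n → ℝ := fun p => fderiv ℝ f p v

/-- Time derivative ∂_t. -/
def dtD : (STn n → ℝ) → STn n → ℝ := dirD (1, 0)

/-- Spatial derivative ∂_j. -/
def dxD (j : Fin n) : (STn n → ℝ) → STn n → ℝ := dirD (0, EuclideanSpace.single j 1)

/-- Spatial Laplacian. -/
def lapD (f : STn n → ℝ) : STn n → ℝ := fun p => ∑ j, dxD j (dxD j f) p

/-- d'Alembertian □ = ∂_t² − Δ. -/
def boxD (f : STn n → ℝ) : STn n → ℝ := fun p => dtD (dtD f) p - lapD f p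

/-- Lorentz boost L_j = t ∂_j + x_j ∂_t. -/
def LD (j : Fin n) (f : STn n → ℝ) : STn n → ℝ := fun p => p.1 * dxD j f p + p.2 j * dtD f p

/-- Rotation Ω_{jk} = x_j ∂_k − x_k ∂_j. -/
def RotD (j k : Fin n) (f : STn n → ℝ) : STn n → ℝ := fun p => p.2 j * dxD k f p - p.2 k * dxD j f p

/-- Scaling S = t ∂_t + x·∇. -/
def SD (f : STn n → ℝ) : STn n → ℝ := fun p => p.1 * dtD f p + ∑ j, p.2 j * dxD j f p

/-- Index type for the Klainerman vector fields. -/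
def GIdx (n : ℕ) := Option (Fin n) ⊕ Fin n ⊕ (Fin n × Fin n) ⊕ Unit

instance : Fintype (GIdx n) := by unfold GIdx; infer_instance
instance : DecidableEq (GIdx n) := by unfold GIdx; infer_instance

/-- The Klainerman vector field with index `i`. -/
def Gop : GIdx n → (STn n → ℝ) → STn n → ℝ
  | Sum.inl none => dtD
  | Sum.inl (some j) => dxD j
  | Sum.inr (Sum.inl j) => LD j
  | Sum.inr (Sum.inr (Sum.inl jk)) => RotD jk.1 jk.2
  | Sum.inr (Sum.inr (Sum.inr _)) => SD

/-- Iterated composition Γ^α along a word of indices. -/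
def GwL : List (GIdx n) → (STn n → ℝ) → STn n → ℝ
  | [], f => f
  | a :: l, f => Gop a (GwL l f)

/-- Sum of a quantity over all products of at most `N` Klainerman vector fields. -/
def SumW (N : ℕ) (Φ : (STn n → ℝ) → ℝ≥0∞) (f : STn n → ℝ) : ℝ≥0∞ :=
  ∑ m ∈ Finset.range (N + 1), ∑ w : Fin m → GIdx n, Φ (GwL (List.ofFn w) f)

/-- Pointwise norm of the full space-time gradient ∂u = (∂_t u, ∇_x u). -/
def gradN (f : STn n → ℝ) (p : STn n) : ℝ := Real.sqrt ((dtD f p) ^ 2 + ∑ j, (dxD j f p) ^ 2)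

/-- Fourier transform (in space) of a real valued function. -/
def fourierS (g : Spc n → ℝ) : Spc n → ℂ := 𝓕 (fun x => (g x : ℂ))

/-- ‖ |D|^s g ‖_{L²}, i.e. the L² norm of ξ ↦ |ξ|^s (ℱ g)(ξ). -/
def DsN (s : ℝ) (g : Spc n → ℝ) : ℝ≥0∞ :=
  eLpNorm (fun ξ : Spc n => ‖ξ‖ ^ s * ‖fourierS g ξ‖) 2 volume

/-- The surface measure on the unit sphere of ℝⁿ. -/
def sphM (n : ℕ) : Measure (Metric.sphere (0 : Spc n) 1) := (volume : Measure (Spc n)).toSphere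

/-- The L^q norm of g(r ω) over the unit sphere. -/
def sphN (n : ℕ) (q : ℝ) (g : Spc n → ℝ) (r : ℝ) : ℝ≥0∞ :=
  (∫⁻ o, (‖g (r • (o : Spc n))‖₊ : ℝ≥0∞) ^ q ∂(sphM n)) ^ (1 / q)

/-- The mixed norm ‖g‖_{p,q} = (∫_0^∞ ‖g(r·)‖_{L^q(S^{n-1})}^p r^{n-1} dr)^{1/p}. -/
def mixN (n : ℕ) (p q : ℝ) (g : Spc n → ℝ) : ℝ≥0∞ :=
  (∫⁻ r in Set.Ioi (0 : ℝ), (sphN n q g r) ^ p * ENNReal.ofReal (r ^ (n - 1))) ^ (1 / p)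

/-- A space-time function which is Schwartz in the space variable for each fixed time. -/
def SchwartzInX (v : STn n → ℝ) : Prop :=
  ∀ t : ℝ, ∃ φ : SchwartzMap (Spc n) ℝ, ∀ x, v (t, x) = φ x

/-- The space-time partial derivatives ∂_0 = ∂_t, ∂_j (j = 1,2,3) on ℝ × ℝ³. -/
def pd4 (α : Fin 4) : (STn 3 → ℝ) → STn 3 → ℝ := Fin.cases dtD (fun j => dxD j) α

/-- The null condition for a set of coefficients {A^{αβ}}. -/
def NullCond (A : Fin 4 → Fin 4 → ℝ) : Prop :=
  ∀ X : Fin 4 → ℝ, (X 0) ^ 2 = (X 1) ^ 2 + (X 2) ^ 2 + (X 3) ^ 2 →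
    ∑ α, ∑ β, A α β * X α * X β = 0

/-- The null form A^{αβ} (∂_α v)(∂_β w). -/
def QF (A : Fin 4 → Fin 4 → ℝ) (v w : STn 3 → ℝ) (p : STn 3) : ℝ :=
  ∑ α, ∑ β, A α β * pd4 α v p * pd4 β w p

/-- The good derivative T_j = ∂_j + (x_j/|x|) ∂_t. -/
def TD (j : Fin 3) (f : STn 3 → ℝ) (p : STn 3) : ℝ := dxD j f p + (p.2 j / ‖p.2‖) * dtD f p

end
/-! ### Differential inequalities at infinity -/

section DifferentialInequalities

open Filter Asymptotics Topology

lemma exists_pos_eventually_mul_le_of_isBigO {α : Type*} {l : Filter α} {f g : α → ℝ}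
    (h : f =O[l] g) (hg : ∀ᶠ t in l, 0 ≤ g t) : ∃ c > 0, ∀ᶠ t in l, c * f t ≤ g t := by
  obtain ⟨C, hC, hfg⟩ := h.exists_pos
  refine ⟨C⁻¹, inv_pos.2 hC, ?_⟩
  filter_upwards [hfg.bound, hg] with t hft hgt
  rw [inv_mul_le_iff₀ hC]
  exact (le_abs_self _).trans (hft.trans_eq (by rw [Real.norm_of_nonneg hgt]))

lemma isBigO_rpow_rpow_of_le {a b : ℝ} (h : a ≤ b) :
    (fun t : ℝ => t ^ a) =O[atTop] fun t => t ^ b := by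
  refine .of_bound' ?_
  filter_upwards [eventually_ge_atTop 1] with t ht
  rw [Real.norm_of_nonneg (by positivity), Real.norm_of_nonneg (by positivity)]
  exact Real.rpow_le_rpow_of_exponent_le ht h

lemma min_mul_rpow_le_rpow {b t ξ : ℝ} (ht : 0 < t) (h₁ : t / 2 ≤ ξ) (h₂ : ξ ≤ t) :
    min 1 ((2 : ℝ) ^ (-b)) * t ^ b ≤ ξ ^ b := by
  rcases le_total 0 b with hb | hb
  · calc min 1 ((2 : ℝ) ^ (-b)) * t ^ b ≤ 2 ^ (-b) * t ^ b := by gcongr; exact min_le_right _ _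
      _ = (t / 2) ^ b := by
          rw [Real.div_rpow ht.le zero_le_two, Real.rpow_neg zero_le_two]; ring
      _ ≤ ξ ^ b := by gcongr
  · calc min 1 ((2 : ℝ) ^ (-b)) * t ^ b ≤ 1 * t ^ b := by gcongr; exact min_le_left _ _
      _ ≤ ξ ^ b := by
          rw [one_mul]; exact Real.rpow_le_rpow_of_nonpos (by linarith) h₂ hb

/-- The mean value theorem on `[t / 2, t]`, instead of integration from a fixed time, covers all
real `b`, including `b ≤ -1`. -/
lemma isBigO_rpow_add_one_of_hasDerivAt {f f' : ℝ → ℝ} {b : ℝ}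
    (hf : ∀ᶠ t in atTop, HasDerivAt f (f' t) t) (hf₀ : ∀ᶠ t in atTop, 0 ≤ f t)
    (hf'₀ : ∀ᶠ t in atTop, 0 ≤ f' t) (h : (fun t => t ^ b) =O[atTop] f') :
    (fun t => t ^ (b + 1)) =O[atTop] f := by
  obtain ⟨c, hc, hcf'⟩ := exists_pos_eventually_mul_le_of_isBigO h hf'₀
  obtain ⟨T, hT⟩ := eventually_atTop.1 (hf.and (hf₀.and hcf'))
  set m := min 1 ((2 : ℝ) ^ (-b))
  have : 0 < m := by positivity
  refine .of_bound (2 / (c * m)) ?_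
  filter_upwards [eventually_ge_atTop (2 * T), eventually_gt_atTop 0] with t htT ht
  obtain ⟨ξ, ⟨hξ₁, hξ₂⟩, hξ⟩ := exists_hasDerivAt_eq_slope f f' (half_lt_self ht)
    (fun x hx => (hT x (by linarith [hx.1])).1.continuousAt.continuousWithinAt)
    (fun x hx => (hT x (by linarith [hx.1])).1)
  have hincr : f t = f (t / 2) + f' ξ * (t / 2) := by rw [hξ]; field_simp; ring
  have hf'ξ : c * (m * t ^ b) ≤ f' ξ :=
    (mul_le_mul_of_nonneg_left (min_mul_rpow_le_rpow ht hξ₁.le hξ₂.le) hc.le).trans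
      (hT ξ (by linarith)).2.2
  have hmain : c * m * t ^ b * (t / 2) ≤ f t := by
    rw [hincr]
    nlinarith [(hT (t / 2) (by linarith)).2.1]
  rw [Real.norm_of_nonneg (by positivity), Real.norm_of_nonneg (hT t (by linarith)).2.1,
    div_mul_eq_mul_div, le_div_iff₀ (by positivity), Real.rpow_add_one ht.ne']
  linarith

lemma tendsto_atTop_of_hasDerivAt_ge {f f' : ℝ → ℝ} {d T : ℝ} (hd : 0 < d)
    (hf : ∀ t > T, HasDerivAt f (f' t) t) (hf' : ∀ t > T, d ≤ f' t) :
    Tendsto f atTop atTop := by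
  have hlin : Tendsto (fun t : ℝ => f (T + 1) + d * (t - (T + 1))) atTop atTop :=
    tendsto_atTop_add_const_left _ _
      ((tendsto_atTop_add_const_right _ _ tendsto_id).const_mul_atTop hd)
  refine tendsto_atTop_mono' _ ?_ hlin
  filter_upwards [eventually_ge_atTop (T + 1)] with t ht
  have hT : ∀ s ∈ Set.Ici (T + 1), T < s := fun s hs => (lt_add_one T).trans_le hs
  have := (convex_Ici (T + 1)).mul_sub_le_image_sub_of_le_deriv
    (fun s hs => (hf s (hT s hs)).continuousAt.continuousWithinAt)
    (fun s hs => (hf s (hT s (interior_subset hs))).differentiableAt.differentiableWithinAt)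
    (fun s hs => (hf s (hT s (interior_subset hs))).deriv ▸ hf' s (hT s (interior_subset hs)))
    (T + 1) Set.self_mem_Ici t ht ht
  linarith

/-- If `f' ≥ c f ^ σ`, then `f ^ (1 - σ)` decreases at least linearly and would become negative. -/
lemma not_rpow_isBigO_deriv {f f' : ℝ → ℝ} {σ : ℝ} (hσ : 1 < σ)
    (hf : ∀ᶠ t in atTop, HasDerivAt f (f' t) t) (hf₀ : ∀ᶠ t in atTop, 0 < f t)
    (hf'₀ : ∀ᶠ t in atTop, 0 ≤ f' t) : ¬ (fun t => f t ^ σ) =O[atTop] f' := by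
  intro h
  obtain ⟨c, hc, hcf'⟩ := exists_pos_eventually_mul_le_of_isBigO h hf'₀
  obtain ⟨T, hT⟩ := eventually_atTop.1 (hf.and (hf₀.and hcf'))
  have hder : ∀ t ≥ T, HasDerivAt (fun s => f s ^ (1 - σ))
      (f' t * (1 - σ) * f t ^ (1 - σ - 1)) t := fun t ht =>
    (hT t ht).1.rpow_const (.inl (hT t ht).2.1.ne')
  have hder_le : ∀ t ≥ T, f' t * (1 - σ) * f t ^ (1 - σ - 1) ≤ -(c * (σ - 1)) := by
    intro t ht
    obtain ⟨-, hpos, hge⟩ := hT t ht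
    have hcancel : f t ^ σ * f t ^ (1 - σ - 1) = 1 := by
      rw [← Real.rpow_add hpos]; simp
    have : c * f t ^ σ * f t ^ (1 - σ - 1) ≤ f' t * f t ^ (1 - σ - 1) := by gcongr
    rw [mul_assoc, hcancel, mul_one] at this
    linarith [mul_le_mul_of_nonneg_left this (sub_nonneg.2 hσ.le)]
  set t := T + f T ^ (1 - σ) / (c * (σ - 1)) with ht
  have hσ' : 0 < σ - 1 := by linarith
  have hfT : 0 < f T := (hT T le_rfl).2.1
  have hTt : T ≤ t := by rw [ht, le_add_iff_nonneg_right]; positivity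
  have hdecr := (convex_Ici T).image_sub_le_mul_sub_of_deriv_le
    (fun s hs => (hder s hs).continuousAt.continuousWithinAt)
    (fun s hs => (hder s (interior_subset hs)).differentiableAt.differentiableWithinAt)
    (fun s hs => (hder s (interior_subset hs)).deriv ▸ hder_le s (interior_subset hs))
    T Set.self_mem_Ici t hTt hTt
  have hlin : c * (σ - 1) * (t - T) = f T ^ (1 - σ) := by rw [ht]; field_simp; ring
  have : 0 < f t ^ (1 - σ) := Real.rpow_pos_of_pos (hT t hTt).2.1 _
  linarith

/-- `f` is eventually nondecreasing and convex and tends to infinity, `f'` and `f''` being its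
first and second derivatives near `∞`. The spatial means of the solutions are of this kind. -/
structure ConvexAtTop (f f' f'' : ℝ → ℝ) : Prop where
  hasDerivAt : ∀ᶠ t in atTop, HasDerivAt f (f' t) t
  hasDerivAt' : ∀ᶠ t in atTop, HasDerivAt f' (f'' t) t
  deriv_nonneg : ∀ᶠ t in atTop, 0 ≤ f' t
  deriv2_nonneg : ∀ᶠ t in atTop, 0 ≤ f'' t
  tendsto_atTop : Tendsto f atTop atTop

namespace ConvexAtTop

variable {f f' f'' g g' g'' : ℝ → ℝ}

lemma add (hf : ConvexAtTop f f' f'') (hg : ConvexAtTop g g' g'') :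
    ConvexAtTop (f + g) (f' + g') (f'' + g'') where
  hasDerivAt := by filter_upwards [hf.1, hg.1] with t h₁ h₂ using h₁.add h₂
  hasDerivAt' := by filter_upwards [hf.2, hg.2] with t h₁ h₂ using h₁.add h₂
  deriv_nonneg := by filter_upwards [hf.3, hg.3] with t h₁ h₂ using add_nonneg h₁ h₂
  deriv2_nonneg := by filter_upwards [hf.4, hg.4] with t h₁ h₂ using add_nonneg h₁ h₂
  tendsto_atTop := hf.5.atTop_add_atTop hg.5

lemma isBigO_rpow_add_two (hf : ConvexAtTop f f' f'') {b : ℝ}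
    (h : (fun t => t ^ b) =O[atTop] f'') : (fun t => t ^ (b + 2)) =O[atTop] f := by
  rw [← one_add_one_eq_two, ← add_assoc]
  exact isBigO_rpow_add_one_of_hasDerivAt hf.hasDerivAt
    (hf.tendsto_atTop.eventually_ge_atTop 0) hf.deriv_nonneg
    (isBigO_rpow_add_one_of_hasDerivAt hf.hasDerivAt' hf.deriv_nonneg hf.deriv2_nonneg h)

/-- The energy `f' ^ 2 - 2 c / (s + 1) * f ^ (s + 1)` is nondecreasing. -/
lemma exists_pos_eventually_mul_rpow_le_deriv_sq (hf : ConvexAtTop f f' f'') {s : ℝ} (hs : -1 < s)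
    (h : (fun t => f t ^ s) =O[atTop] f'') :
    ∃ k > 0, ∀ᶠ t in atTop, k * f t ^ (s + 1) ≤ f' t ^ 2 := by
  obtain ⟨c, hc, hcf''⟩ := exists_pos_eventually_mul_le_of_isBigO h hf.deriv2_nonneg
  obtain ⟨T, hT⟩ := eventually_atTop.1 (hf.hasDerivAt.and (hf.hasDerivAt'.and
    (hf.deriv_nonneg.and (hcf''.and (hf.tendsto_atTop.eventually_gt_atTop 0)))))
  have hs₁ : 0 < s + 1 := by linarith
  set k := 2 * c / (s + 1) with hk
  have hk₀ : 0 < k := by positivity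
  set E := fun t => f' t ^ 2 - k * f t ^ (s + 1)
  have hder : ∀ t ≥ T, HasDerivAt E (2 * f' t * (f'' t - c * f t ^ s)) t := by
    intro t ht
    obtain ⟨hft, hf't, -, -, hpos⟩ := hT t ht
    refine ((hf't.pow 2).sub ((hft.rpow_const (.inl hpos.ne')).const_mul k)).congr_deriv ?_
    rw [add_sub_cancel_right, hk]
    field_simp
    ring
  have hE : MonotoneOn E (Set.Ici T) := by
    refine monotoneOn_of_deriv_nonneg (convex_Ici T)
      (fun t ht => (hder t ht).continuousAt.continuousWithinAt)
      (fun t ht => (hder t (interior_subset ht)).differentiableAt.differentiableWithinAt)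
      fun t ht => ?_
    obtain ⟨-, -, hnonneg, hge, -⟩ := hT t (interior_subset ht)
    rw [(hder t (interior_subset ht)).deriv]
    exact mul_nonneg (by positivity) (sub_nonneg.2 hge)
  have hlim : Tendsto (fun t => k / 2 * f t ^ (s + 1)) atTop atTop :=
    ((tendsto_rpow_atTop hs₁).comp hf.tendsto_atTop).const_mul_atTop (by positivity)
  refine ⟨k / 2, half_pos hk₀, ?_⟩
  filter_upwards [hlim.eventually_ge_atTop (-E T), eventually_ge_atTop T] with t hkt ht
  have : E T ≤ f' t ^ 2 - k * f t ^ (s + 1) := hE Set.self_mem_Ici ht ht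
  linarith

lemma rpow_isBigO_deriv (hf : ConvexAtTop f f' f'') {s : ℝ} (hs : -1 < s)
    (h : (fun t => f t ^ s) =O[atTop] f'') :
    (fun t => f t ^ ((s + 1) / 2)) =O[atTop] f' := by
  obtain ⟨k, hk, hkf⟩ := hf.exists_pos_eventually_mul_rpow_le_deriv_sq hs h
  refine .of_bound (√k)⁻¹ ?_
  filter_upwards [hkf, hf.tendsto_atTop.eventually_gt_atTop 0, hf.deriv_nonneg]
    with t hsq hpos hnonneg
  rw [Real.norm_of_nonneg (by positivity), Real.norm_of_nonneg hnonneg,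
    ← div_eq_inv_mul, le_div_iff₀' (by positivity)]
  calc √k * f t ^ ((s + 1) / 2) = √(k * f t ^ (s + 1)) := by
        rw [Real.sqrt_mul hk.le, Real.sqrt_eq_rpow (f t ^ (s + 1)), ← Real.rpow_mul hpos.le,
          mul_one_div]
    _ ≤ f' t := Real.sqrt_le_iff.2 ⟨hnonneg, hsq⟩

lemma not_rpow_isBigO_deriv2 (hf : ConvexAtTop f f' f'') {s : ℝ} (hs : 1 < s) :
    ¬ (fun t => f t ^ s) =O[atTop] f'' := fun h =>
  not_rpow_isBigO_deriv (σ := (s + 1) / 2) (by linarith) hf.hasDerivAt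
    (hf.tendsto_atTop.eventually_gt_atTop 0) hf.deriv_nonneg
    (hf.rpow_isBigO_deriv (by linarith) h)

end ConvexAtTop

lemma isBigO_rpow_of_weighted {V W : ℝ → ℝ} {a α p : ℝ} (hp : 0 ≤ p)
    (hV : (fun t => t ^ a) =O[atTop] V)
    (hW : (fun t => t ^ (-α) * |V t| ^ p) =O[atTop] W) :
    (fun t => t ^ (a * p - α)) =O[atTop] W := by
  have hVp : (fun t => (t ^ a) ^ p) =O[atTop] fun t => |V t| ^ p :=
    (isBigO_abs_right.2 hV).rpow hp (.of_forall fun _ => abs_nonneg _)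
  refine (((isBigO_refl (fun t : ℝ => t ^ (-α)) atTop).mul hVp).congr' ?_ .rfl).trans hW
  filter_upwards [eventually_gt_atTop 0] with t ht
  rw [← Real.rpow_mul ht.le, ← Real.rpow_add ht, neg_add_eq_sub]

/-- When `V` outgrows every power of `t`, the weight `t ^ (-α)` costs only an arbitrarily small
part of the exponent `p`. -/
lemma rpow_isBigO_of_weighted_of_forall_rpow_isBigO {V W : ℝ → ℝ} {α p s : ℝ} (hs : s < p)
    (hV : ∀ a : ℝ, (fun t => t ^ a) =O[atTop] V) (hV₀ : ∀ᶠ t in atTop, 0 < V t)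
    (hW : (fun t => t ^ (-α) * |V t| ^ p) =O[atTop] W) :
    (fun t => V t ^ s) =O[atTop] W := by
  have hps : 0 < p - s := sub_pos.2 hs
  have hVps : (fun t => (t ^ (α / (p - s))) ^ (p - s)) =O[atTop] fun t => V t ^ (p - s) :=
    (hV _).rpow hps.le (hV₀.mono fun _ => le_of_lt)
  refine (((isBigO_refl (fun t => t ^ (-α) * V t ^ s) atTop).mul hVps).congr' ?_ ?_).trans hW
  · filter_upwards [eventually_gt_atTop 0] with t ht
    rw [← Real.rpow_mul ht.le, div_mul_cancel₀ _ hps.ne', mul_right_comm, ← Real.rpow_add ht,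
      neg_add_cancel, Real.rpow_zero, one_mul]
  · filter_upwards [hV₀] with t ht
    rw [mul_assoc, ← Real.rpow_add ht, add_sub_cancel, abs_of_pos ht]

lemma add_rpow_isBigO {α : Type*} {l : Filter α} {f g F G : α → ℝ} {s : ℝ} (hs : 0 ≤ s)
    (hf : ∀ᶠ t in l, 0 ≤ f t) (hg : ∀ᶠ t in l, 0 ≤ g t) (hF : ∀ᶠ t in l, 0 ≤ F t)
    (hG : ∀ᶠ t in l, 0 ≤ G t) (hfG : (fun t => f t ^ s) =O[l] G)
    (hgF : (fun t => g t ^ s) =O[l] F) : (fun t => (f + g) t ^ s) =O[l] (F + G) := by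
  have hsum : (fun t => f t ^ s + g t ^ s) =O[l] (F + G) := by
    refine .add (hfG.trans (.of_bound' ?_)) (hgF.trans (.of_bound' ?_)) <;>
      filter_upwards [hF, hG] with t h₁ h₂ <;>
      rw [Pi.add_apply, Real.norm_of_nonneg (by positivity), Real.norm_of_nonneg (by positivity)]
      <;> linarith
  refine IsBigO.trans (.of_bound (2 ^ s) ?_) hsum
  filter_upwards [hf, hg] with t h₁ h₂
  rw [Pi.add_apply, Real.norm_of_nonneg (by positivity), Real.norm_of_nonneg (by positivity)]
  calc (f t + g t) ^ s ≤ (2 * max (f t) (g t)) ^ s := by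
        gcongr
        linarith [le_max_left (f t) (g t), le_max_right (f t) (g t)]
    _ = 2 ^ s * max (f t) (g t) ^ s := Real.mul_rpow zero_le_two (le_max_of_le_left h₁)
    _ ≤ 2 ^ s * (f t ^ s + g t ^ s) := by
        gcongr
        rcases max_choice (f t) (g t) with h | h <;> rw [h]
        · exact le_add_of_nonneg_right (by positivity)
        · exact le_add_of_nonneg_left (by positivity)

lemma forall_of_forall_add {P : ℝ → Prop} {a₀ δ : ℝ} (hδ : 0 < δ) (hP : Antitone P)
    (h₀ : P a₀) (hstep : ∀ a ≥ a₀, P a → P (a + δ)) (a : ℝ) : P a := by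
  have hnat : ∀ k : ℕ, P (a₀ + k * δ) := by
    intro k
    induction k with
    | zero => simpa using h₀
    | succ k ih =>
      convert hstep _ (le_add_of_nonneg_right (by positivity)) ih using 1
      push_cast
      ring
  obtain ⟨k, hk⟩ := exists_nat_gt ((a - a₀) / δ)
  rw [div_lt_iff₀ hδ] at hk
  exact hP (by linarith) (hnat k)

/-- A bound `V ≳ t ^ a` improves to `V ≳ t ^ (N + 2 + 2 q + p q (a - N))`. At `a = β + 2` the gain
in the exponent is positive, and it only grows with `a`. -/
lemma isBigO_rpow_of_system {U U' U'' V V' V'' : ℝ → ℝ} {N p q β : ℝ} (hp : 0 ≤ p) (hq : 0 ≤ q)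
    (hpq : 1 ≤ p * q) (hβ : (p * q - 1) * (N - 2 - β) < 2 * (q + 1))
    (hU : ConvexAtTop U U' U'') (hV : ConvexAtTop V V' V'')
    (hU'' : (fun t => t ^ (-(N * (p - 1))) * |V t| ^ p) =O[atTop] U'')
    (hV'' : (fun t => t ^ (-(N * (q - 1))) * |U t| ^ q) =O[atTop] V'')
    (hV''β : (fun t => t ^ β) =O[atTop] V'') (a : ℝ) : (fun t => t ^ a) =O[atTop] V := by
  set δ := 2 * (q + 1) - (p * q - 1) * (N - 2 - β) with hδ
  refine forall_of_forall_add (P := fun a => (fun t : ℝ => t ^ a) =O[atTop] V) (δ := δ)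
    (sub_pos.2 hβ) (fun a b hab hb => (isBigO_rpow_rpow_of_le hab).trans hb)
    (hV.isBigO_rpow_add_two hV''β) (fun a ha haV => ?_) a
  have haU := hU.isBigO_rpow_add_two (isBigO_rpow_of_weighted hp haV hU'')
  have haV' := hV.isBigO_rpow_add_two (isBigO_rpow_of_weighted hq haU hV'')
  refine (isBigO_rpow_rpow_of_le ?_).trans haV'
  have : 0 ≤ (p * q - 1) * (a - (β + 2)) :=
    mul_nonneg (sub_nonneg.2 hpq) (sub_nonneg.2 ha)
  rw [hδ]
  linarith

theorem false_of_convexAtTop_system {U U' U'' V V' V'' : ℝ → ℝ} {N p q β : ℝ} (hp : 1 < p)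
    (hq : 1 < q) (hβ : (p * q - 1) * (N - 2 - β) < 2 * (q + 1))
    (hU : ConvexAtTop U U' U'') (hV : ConvexAtTop V V' V'')
    (hU'' : (fun t => t ^ (-(N * (p - 1))) * |V t| ^ p) =O[atTop] U'')
    (hV'' : (fun t => t ^ (-(N * (q - 1))) * |U t| ^ q) =O[atTop] V'')
    (hV''β : (fun t => t ^ β) =O[atTop] V'') : False := by
  have allV := isBigO_rpow_of_system (by linarith) (by linarith) (by nlinarith) hβ hU hV
    hU'' hV'' hV''β
  have allU : ∀ a : ℝ, (fun t => t ^ a) =O[atTop] U := fun a => by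
    have := hU.isBigO_rpow_add_two
      (isBigO_rpow_of_weighted (by linarith) (allV ((a - 2 + N * (p - 1)) / p)) hU'')
    rwa [div_mul_cancel₀ _ (by linarith), add_sub_cancel_right, sub_add_cancel] at this
  obtain ⟨s, hs₁, hs⟩ := exists_between (lt_min hp hq)
  have hVs := rpow_isBigO_of_weighted_of_forall_rpow_isBigO (hs.trans_le (min_le_left _ _)) allV
    (hV.tendsto_atTop.eventually_gt_atTop 0) hU''
  have hUs := rpow_isBigO_of_weighted_of_forall_rpow_isBigO (hs.trans_le (min_le_right _ _)) allU
    (hU.tendsto_atTop.eventually_gt_atTop 0) hV''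
  exact (hU.add hV).not_rpow_isBigO_deriv2 hs₁ (add_rpow_isBigO (by linarith)
    (hU.tendsto_atTop.eventually_ge_atTop 0) (hV.tendsto_atTop.eventually_ge_atTop 0)
    hU.deriv2_nonneg hV.deriv2_nonneg hUs hVs)

end DifferentialInequalities

/-! ### Hölder's inequality on sets of finite measure -/

section Holder

open Filter Asymptotics

lemma integral_abs_rpow_le {α : Type*} [MeasurableSpace α] {μ : Measure α} [IsFiniteMeasure μ]
    {f : α → ℝ} {r : ℝ} (hr : 1 < r) (hf : MemLp f (ENNReal.ofReal r) μ) :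
    (∫ x, |f x| ∂μ) ^ r ≤ μ.real Set.univ ^ (r - 1) * ∫ x, |f x| ^ r ∂μ := by
  have hr₀ : 0 < r := zero_lt_one.trans hr
  have hconj := Real.HolderConjugate.conjExponent hr
  have hHolder : ∫ x, |f x| ∂μ
      ≤ (∫ x, |f x| ^ r ∂μ) ^ (1 / r) * μ.real Set.univ ^ (1 / r.conjExponent) := by
    simpa using integral_mul_le_Lp_mul_Lq_of_nonneg (f := fun x => |f x|) (g := fun _ => 1) hconj
      (.of_forall fun x => abs_nonneg (f x)) (.of_forall fun _ => zero_le_one) hf.abs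
      (memLp_const 1)
  have hJ : 0 ≤ ∫ x, |f x| ^ r ∂μ := integral_nonneg fun x => by positivity
  calc (∫ x, |f x| ∂μ) ^ r
      ≤ ((∫ x, |f x| ^ r ∂μ) ^ (1 / r) * μ.real Set.univ ^ (1 / r.conjExponent)) ^ r := by
        gcongr
    _ = μ.real Set.univ ^ (r - 1) * ∫ x, |f x| ^ r ∂μ := by
        rw [Real.mul_rpow (by positivity) (by positivity), ← Real.rpow_mul hJ,
          ← Real.rpow_mul measureReal_nonneg, one_div_mul_cancel hr₀.ne', Real.rpow_one, mul_comm,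
          Real.conjExponent]
        congr 2
        field_simp

lemma setIntegral_abs_rpow_le {α : Type*} [MeasurableSpace α] {μ : Measure α} {f : α → ℝ} {r : ℝ}
    (hr : 1 < r) (hf : MemLp f (ENNReal.ofReal r) μ) {S : Set α} (hS : μ S ≠ ⊤) :
    (∫ x in S, |f x| ∂μ) ^ r ≤ μ.real S ^ (r - 1) * ∫ x, |f x| ^ r ∂μ := by
  have : IsFiniteMeasure (μ.restrict S) := isFiniteMeasure_restrict.2 hS
  have hint : Integrable (fun x => |f x| ^ r) μ := by
    simpa [ENNReal.toReal_ofReal (zero_le_one.trans hr.le)] using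
      hf.integrable_norm_rpow (by simpa using zero_lt_one.trans hr) ENNReal.ofReal_ne_top
  refine (integral_abs_rpow_le hr (hf.restrict S)).trans ?_
  rw [measureReal_restrict_apply_univ]
  gcongr ?_ * ?_
  exact setIntegral_le_integral hint (.of_forall fun x => by positivity)

lemma rpow_neg_mul_rpow_isBigO {I J m : ℝ → ℝ} {a r : ℝ} (hr : 1 ≤ r)
    (hm : m =O[atTop] fun t => t ^ a)
    (hI : ∀ᶠ t in atTop, |I t| ^ r ≤ m t ^ (r - 1) * J t) :
    (fun t => t ^ (-(a * (r - 1))) * |I t| ^ r) =O[atTop] J := by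
  have hmr : (fun t => m t ^ (r - 1)) =O[atTop] fun t => (t ^ a) ^ (r - 1) := by
    refine hm.rpow (sub_nonneg.2 hr) ?_
    filter_upwards [eventually_ge_atTop 0] with t ht using Real.rpow_nonneg ht a
  have hIJ : (fun t => |I t| ^ r) =O[atTop] fun t => (t ^ a) ^ (r - 1) * J t := by
    refine IsBigO.trans (.of_bound' ?_) (hmr.mul (isBigO_refl J atTop))
    filter_upwards [hI] with t ht
    rw [Real.norm_of_nonneg (by positivity)]
    exact ht.trans (le_abs_self _)
  refine ((isBigO_refl _ atTop).mul hIJ).congr' .rfl ?_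
  filter_upwards [eventually_gt_atTop 0] with t ht
  rw [← Real.rpow_mul ht.le, ← mul_assoc, ← Real.rpow_add ht, neg_add_cancel, Real.rpow_zero,
    one_mul]

end Holder

/-! ### Volumes of shells and caps -/

section Volume

open Module

lemma measureReal_closedBall_diff_closedBall_le {E : Type*} [NormedAddCommGroup E]
    [NormedSpace ℝ E] [FiniteDimensional ℝ E] [MeasurableSpace E] [BorelSpace E] (μ : Measure E)
    [μ.IsAddHaarMeasure] {a b : ℝ} (ha : 0 ≤ a) (hab : a ≤ b) :
    μ.real (Metric.closedBall 0 b \ Metric.closedBall 0 a)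
      ≤ (b - a) * finrank ℝ E * b ^ (finrank ℝ E - 1) * μ.real (Metric.ball 0 1) := by
  rw [measureReal_sdiff (Metric.closedBall_subset_closedBall hab) measurableSet_closedBall
      (isCompact_closedBall _ _).measure_lt_top.ne,
    Measure.addHaar_real_closedBall _ _ (ha.trans hab), Measure.addHaar_real_closedBall _ _ ha,
    ← sub_mul]
  gcongr
  refine (le_abs_self _).trans ((abs_pow_sub_pow_le _ _ _).trans_eq ?_)
  rw [abs_of_nonneg (sub_nonneg.2 hab), abs_of_nonneg (ha.trans hab), abs_of_nonneg ha,
    max_eq_left hab]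

variable {E : Type*} [NormedAddCommGroup E] [InnerProductSpace ℝ E]

/-- The linear map which, for a unit vector `e`, fixes `e` and multiplies its orthogonal complement
by `c`. It carries a thin cap around `e` into a ball of fixed size. -/
noncomputable def perpScale (c : ℝ) (e : E) : E →ₗ[ℝ] E :=
  c • LinearMap.transvection (innerₛₗ ℝ e) ((c⁻¹ - 1) • e)

lemma det_perpScale [FiniteDimensional ℝ E] {c : ℝ} (hc : c ≠ 0) {e : E} (he : ‖e‖ = 1) :
    LinearMap.det (perpScale c e) = c ^ (finrank ℝ E - 1) := by
  have : Nontrivial E := ⟨e, 0, norm_ne_zero_iff.1 (he ▸ one_ne_zero)⟩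
  rw [perpScale, LinearMap.det_smul, LinearMap.transvection.det, innerₛₗ_apply_apply,
    inner_smul_right, real_inner_self_eq_norm_sq, he, one_pow, mul_one, add_sub_cancel,
    pow_sub₀ c hc finrank_pos, pow_one]

lemma norm_perpScale_sq {c : ℝ} (hc : c ≠ 0) {e : E} (he : ‖e‖ = 1) (θ : E) :
    ‖perpScale c e θ‖ ^ 2 = inner ℝ e θ ^ 2 + c ^ 2 * (‖θ‖ ^ 2 - inner ℝ e θ ^ 2) := by
  rw [perpScale, LinearMap.smul_apply, LinearMap.transvection.apply, innerₛₗ_apply_apply,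
    norm_smul, mul_pow, norm_add_sq_real, smul_smul, inner_smul_right, norm_smul, he,
    real_inner_comm θ e, Real.norm_eq_abs, Real.norm_eq_abs, sq_abs, mul_one, sq_abs]
  field_simp
  ring

variable [FiniteDimensional ℝ E] [MeasurableSpace E] [BorelSpace E] (μ : Measure E)
  [μ.IsAddHaarMeasure]

lemma measure_cap_le_of_norm_eq_one {τ : ℝ} (hτ₀ : 0 ≤ τ) (hτ₁ : τ < 1) {e : E} (he : ‖e‖ = 1) :
    μ {θ | θ ∈ Metric.ball 0 1 ∧ τ * ‖θ‖ < inner ℝ e θ}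
      ≤ ENNReal.ofReal (√(1 - τ ^ 2) ^ (finrank ℝ E - 1)) * μ (Metric.closedBall 0 2) := by
  have hτ : 0 < 1 - τ ^ 2 := by nlinarith
  have hρ : 0 < √(1 - τ ^ 2) := Real.sqrt_pos.2 hτ
  have hρ₀ : (√(1 - τ ^ 2))⁻¹ ≠ 0 := inv_ne_zero hρ.ne'
  have hsub : {θ | θ ∈ Metric.ball 0 1 ∧ τ * ‖θ‖ < inner ℝ e θ}
      ⊆ perpScale (√(1 - τ ^ 2))⁻¹ e ⁻¹' Metric.closedBall 0 2 := by
    rintro θ ⟨hθ₁, hθ⟩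
    rw [mem_ball_zero_iff] at hθ₁
    have hθsq : ‖θ‖ ^ 2 < 1 := by rw [sq_lt_one_iff₀ (norm_nonneg θ)]; exact hθ₁
    have hle : inner ℝ e θ ≤ ‖θ‖ := by simpa [he] using real_inner_le_norm e θ
    have hτθ : 0 ≤ τ * ‖θ‖ := by positivity
    have hperp : ‖θ‖ ^ 2 - inner ℝ e θ ^ 2 ≤ 1 - τ ^ 2 := by nlinarith
    rw [Set.mem_preimage, mem_closedBall_zero_iff]
    refine le_of_sq_le_sq ?_ zero_le_two
    calc ‖perpScale (√(1 - τ ^ 2))⁻¹ e θ‖ ^ 2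
        = inner ℝ e θ ^ 2 + (1 - τ ^ 2)⁻¹ * (‖θ‖ ^ 2 - inner ℝ e θ ^ 2) := by
          rw [norm_perpScale_sq hρ₀ he, inv_pow, Real.sq_sqrt hτ.le]
      _ ≤ 1 ^ 2 + (1 - τ ^ 2)⁻¹ * (1 - τ ^ 2) := by
          gcongr
          · exact hτθ.trans hθ.le
          · exact hle.trans hθ₁.le
      _ ≤ 2 ^ 2 := by rw [inv_mul_cancel₀ hτ.ne']; norm_num
  refine (measure_mono hsub).trans_eq ?_
  rw [Measure.addHaar_preimage_linearMap _ (by rw [det_perpScale hρ₀ he]; positivity),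
    det_perpScale hρ₀ he, ← inv_pow, inv_inv, abs_of_pos (by positivity)]

lemma measure_cap_le {a b : ℝ} (ha : 0 ≤ a) (hab : a < b) {x : E} (hx : ‖x‖ ≤ b) :
    μ {θ | θ ∈ Metric.ball 0 1 ∧ a * ‖θ‖ < inner ℝ x θ}
      ≤ ENNReal.ofReal (√(2 * (b - a) / b) ^ (finrank ℝ E - 1)) * μ (Metric.closedBall 0 2) := by
  have hb : 0 < b := ha.trans_lt hab
  rcases eq_or_ne x 0 with rfl | hx₀
  · have : {θ : E | θ ∈ Metric.ball 0 1 ∧ a * ‖θ‖ < inner ℝ 0 θ} = ∅ :=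
      Set.eq_empty_of_forall_notMem fun θ hθ => by
        have := hθ.2
        rw [inner_zero_left] at this
        exact this.not_ge (by positivity)
    rw [this, measure_empty]
    exact zero_le
  have hxn : 0 < ‖x‖ := norm_pos_iff.2 hx₀
  have hsub : {θ | θ ∈ Metric.ball 0 1 ∧ a * ‖θ‖ < inner ℝ x θ}
      ⊆ {θ | θ ∈ Metric.ball 0 1 ∧ a / b * ‖θ‖ < inner ℝ (‖x‖⁻¹ • x) θ} := by
    rintro θ ⟨hθ₁, hθ⟩
    refine ⟨hθ₁, ?_⟩
    rw [real_inner_smul_left, ← div_eq_inv_mul, lt_div_iff₀ hxn]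
    refine lt_of_le_of_lt ?_ hθ
    calc a / b * ‖θ‖ * ‖x‖ ≤ a / b * ‖θ‖ * b := by gcongr
      _ = a * ‖θ‖ := by field_simp
  have hτ : 1 - (a / b) ^ 2 ≤ 2 * (b - a) / b := by
    have : 2 * (b - a) / b = 2 - 2 * (a / b) := by field_simp
    nlinarith [sq_nonneg (1 - a / b)]
  refine (measure_mono hsub).trans ((measure_cap_le_of_norm_eq_one μ (div_nonneg ha hb.le)
    ((div_lt_one hb).2 hab) (norm_smul_inv_norm (𝕜 := ℝ) hx₀)).trans ?_)
  gcongr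

end Volume

/-! ### Averaging -/

lemma mul_measure_univ_le_mul_lintegral {α β : Type*} [MeasurableSpace α] [MeasurableSpace β]
    {μ : Measure α} {ν : Measure β} [SFinite μ] [SFinite ν] {A : Set (α × β)}
    (hA : MeasurableSet A) {h : β → ℝ≥0∞} (hh : Measurable h) {d K : ℝ≥0∞}
    (hd : ∀ᵐ θ ∂μ, d ≤ ∫⁻ x in {x | (θ, x) ∈ A}, h x ∂ν)
    (hK : ∀ᵐ x ∂ν, μ {θ | (θ, x) ∈ A} ≤ K) :
    d * μ Set.univ ≤ K * ∫⁻ x, h x ∂ν := by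
  have hAθ : ∀ θ, MeasurableSet {x | (θ, x) ∈ A} := fun θ => measurable_prodMk_left hA
  have hAx : ∀ x, MeasurableSet {θ | (θ, x) ∈ A} := fun x => measurable_prodMk_right hA
  calc d * μ Set.univ = ∫⁻ _, d ∂μ := (lintegral_const d).symm
    _ ≤ ∫⁻ θ, ∫⁻ x in {x | (θ, x) ∈ A}, h x ∂ν ∂μ := lintegral_mono_ae hd
    _ = ∫⁻ θ, ∫⁻ x, A.indicator (fun z => h z.2) (θ, x) ∂ν ∂μ :=
        lintegral_congr fun θ => (lintegral_indicator (hAθ θ) h).symm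
    _ = ∫⁻ x, ∫⁻ θ, A.indicator (fun z => h z.2) (θ, x) ∂μ ∂ν :=
        lintegral_lintegral_swap ((hh.comp measurable_snd).indicator hA).aemeasurable
    _ = ∫⁻ x, h x * μ {θ | (θ, x) ∈ A} ∂ν :=
        lintegral_congr fun x => lintegral_indicator_const (hAx x) (h x)
    _ ≤ ∫⁻ x, K * h x ∂ν := lintegral_mono_ae <| hK.mono fun x hx => by
        rw [mul_comm]; gcongr
    _ = K * ∫⁻ x, h x ∂ν := lintegral_const_mul K hh

/-! ### Green's identity for functions supported in a light cone -/

section Green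

variable {n : ℕ} {u ψ f g : STn n → ℝ} {R t : ℝ}

lemma contDiff_dirD {m k : WithTop ℕ∞} (hf : ContDiff ℝ k f) (hmk : m + 1 ≤ k) (w : STn n) :
    ContDiff ℝ m (dirD w f) :=
  (hf.fderiv_right hmk).clm_apply contDiff_const

lemma continuous_dirD (hf : ContDiff ℝ 1 f) (w : STn n) : Continuous (dirD w f) :=
  (hf.continuous_fderiv one_ne_zero).clm_apply continuous_const

lemma continuous_boxD (hf : ContDiff ℝ 2 f) : Continuous (boxD f) :=
  have hdir (w : STn n) : Continuous (dirD w (dirD w f)) :=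
    continuous_dirD (contDiff_dirD hf one_add_one_eq_two.le w) w
  (hdir _).sub (continuous_finsetSum _ fun _ _ => hdir _)

lemma dirD_mul {z : STn n} (hf : DifferentiableAt ℝ f z) (hg : DifferentiableAt ℝ g z)
    (w : STn n) : dirD w (fun y => f y * g y) z = dirD w f z * g z + f z * dirD w g z := by
  simp only [dirD, fderiv_fun_mul hf hg, add_apply,
    smul_apply, smul_eq_mul]
  ring

/-- The expression `(∂_w u) ψ - u ∂_w ψ`. For `w = ∂_t` it is the density of the flux of `u` against
the test function `ψ`. -/
noncomputable def wronskian (w : STn n) (u ψ : STn n → ℝ) : STn n → ℝ :=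
  fun z => dirD w u z * ψ z - u z * dirD w ψ z

lemma contDiff_wronskian (hu : ContDiff ℝ 2 u) (hψ : ContDiff ℝ 2 ψ) (w : STn n) :
    ContDiff ℝ 1 (wronskian w u ψ) :=
  ((contDiff_dirD hu one_add_one_eq_two.le w).mul (hψ.of_le one_le_two)).sub
    ((hu.of_le one_le_two).mul (contDiff_dirD hψ one_add_one_eq_two.le w))

lemma dirD_wronskian (hu : ContDiff ℝ 2 u) (hψ : ContDiff ℝ 2 ψ) (w z : STn n) :
    dirD w (wronskian w u ψ) z = dirD w (dirD w u) z * ψ z - u z * dirD w (dirD w ψ) z := by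
  have hu₁ := hu.differentiable two_ne_zero z
  have hψ₁ := hψ.differentiable two_ne_zero z
  have hdu := (contDiff_dirD hu one_add_one_eq_two.le w).differentiable one_ne_zero z
  have hdψ := (contDiff_dirD hψ one_add_one_eq_two.le w).differentiable one_ne_zero z
  have hsub : dirD w (wronskian w u ψ) z
      = dirD w (fun y => dirD w u y * ψ y) z - dirD w (fun y => u y * dirD w ψ y) z := by
    unfold wronskian
    rw [dirD, fderiv_fun_sub (hdu.fun_mul hψ₁) (hu₁.fun_mul hdψ)]
    rfl
  rw [hsub, dirD_mul hdu hψ₁, dirD_mul hu₁ hdψ]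
  ring

lemma boxD_mul_sub_mul_boxD (hu : ContDiff ℝ 2 u) (hψ : ContDiff ℝ 2 ψ) (z : STn n) :
    boxD u z * ψ z - u z * boxD ψ z = dtD (wronskian (1, 0) u ψ) z
      - ∑ j, dxD j (wronskian (0, EuclideanSpace.single j 1) u ψ) z := by
  simp only [boxD, lapD, dtD, dxD, dirD_wronskian hu hψ, Finset.sum_sub_distrib,
    ← Finset.sum_mul, ← Finset.mul_sum]
  ring

/-- `f` vanishes outside the cone `|x| ≤ t + R` at all times `t ≥ 0`. Negative times are
unrestricted, because the equations hold only in the future. -/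
def SupportedInCone (R : ℝ) (f : STn n → ℝ) : Prop :=
  ∀ z : STn n, 0 ≤ z.1 → z.1 + R < ‖z.2‖ → f z = 0

lemma SupportedInCone.mono {R' : ℝ} (hf : SupportedInCone R f) (hR : R ≤ R') :
    SupportedInCone R' f :=
  fun z hz h => hf z hz (by linarith)

lemma SupportedInCone.abs_rpow (hf : SupportedInCone R f) {r : ℝ} (hr : r ≠ 0) :
    SupportedInCone R fun z => |f z| ^ r := fun z hz h => by
  simp only [hf z hz h, abs_zero, Real.zero_rpow hr]

/-- At `t = 0` this uses the continuity of `∂_w f`, since nothing is known for `t < 0`. -/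
lemma supportedInCone_dirD (hs : SupportedInCone R f) (hf : ContDiff ℝ 1 f) (w : STn n) :
    SupportedInCone R (dirD w f) := by
  have hpos : ∀ z : STn n, 0 < z.1 → z.1 + R < ‖z.2‖ → dirD w f z = 0 := by
    intro z h₀ h
    have hopen : IsOpen {y : STn n | 0 < y.1 ∧ y.1 + R < ‖y.2‖} :=
      (isOpen_lt continuous_const continuous_fst).inter
        (isOpen_lt (continuous_fst.add continuous_const) continuous_snd.norm)
    have hzero : f =ᶠ[nhds z] fun _ => 0 := by
      filter_upwards [hopen.mem_nhds ⟨h₀, h⟩] with y hy using hs y hy.1.le hy.2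
    rw [dirD, hzero.fderiv_eq, fderiv_fun_const, Pi.zero_apply,
      zero_apply]
  rintro ⟨t, x⟩ ht h
  have hcont : Continuous fun s => dirD w f (s, x) :=
    (continuous_dirD hf w).comp (by fun_prop)
  refine tendsto_nhds_unique (hcont.continuousWithinAt (s := Set.Ioi t)) ?_
  refine tendsto_const_nhds.congr' ?_
  filter_upwards [self_mem_nhdsWithin, mem_nhdsWithin_of_mem_nhds
    ((isOpen_lt (continuous_id.add continuous_const) continuous_const).mem_nhds h)] with s hs hsx
    using (hpos (s, x) (lt_of_le_of_lt ht hs) hsx).symm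

lemma supportedInCone_boxD (hs : SupportedInCone R f) (hf : ContDiff ℝ 2 f) :
    SupportedInCone R (boxD f) := by
  have hdir (w : STn n) : SupportedInCone R (dirD w (dirD w f)) :=
    supportedInCone_dirD (supportedInCone_dirD hs (hf.of_le one_le_two) w)
      (contDiff_dirD hf one_add_one_eq_two.le w) w
  intro z hz h
  exact sub_eq_zero.2 ((hdir _ z hz h).trans
    (Finset.sum_eq_zero fun _ _ => hdir _ z hz h).symm)

lemma supportedInCone_wronskian (hs : SupportedInCone R u) (hu : ContDiff ℝ 1 u) (w : STn n)
    (ψ : STn n → ℝ) :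
    SupportedInCone R (wronskian w u ψ) := fun z hz h => by
  rw [wronskian, supportedInCone_dirD hs hu w z hz h, hs z hz h, zero_mul, zero_mul, sub_zero]

namespace SupportedInCone

lemma hasCompactSupport_slice (hs : SupportedInCone R f) (ht : 0 ≤ t) :
    HasCompactSupport fun x => f (t, x) :=
  .intro (isCompact_closedBall 0 (t + R)) fun x hx =>
    hs (t, x) ht (by simpa using hx)

lemma integrable_slice (hs : SupportedInCone R f) (hf : Continuous f) (ht : 0 ≤ t) :
    Integrable fun x => f (t, x) :=
  Continuous.integrable_of_hasCompactSupport (by fun_prop) (hs.hasCompactSupport_slice ht)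

lemma continuousOn_integral (hs : SupportedInCone R f) (hf : Continuous f) (T : ℝ) :
    ContinuousOn (fun t => ∫ x, f (t, x)) (Set.Icc 0 T) :=
  continuousOn_integral_of_compact_support (f := fun t x => f (t, x))
    (isCompact_closedBall 0 (T + R)) hf.continuousOn fun t x ht hx =>
      hs (t, x) ht.1 (by rw [mem_closedBall_zero_iff, not_le] at hx; linarith [ht.2])

lemma hasDerivAt_integral (hs : SupportedInCone R f) (hf : ContDiff ℝ 1 f) (ht : 0 < t) :
    HasDerivAt (fun s => ∫ x, f (s, x)) (∫ x, dtD f (t, x)) t := by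
  have hdt : Continuous (dtD f) := continuous_dirD hf _
  obtain ⟨M, hM⟩ := ((isCompact_Icc (a := 0) (b := t + 1)).prod
    (isCompact_closedBall (0 : Spc n) (t + 1 + R))).exists_bound_of_continuousOn hdt.continuousOn
  refine (hasDerivAt_integral_of_dominated_loc_of_deriv_le (F := fun s x => f (s, x))
    (F' := fun s x => dtD f (s, x)) (s := Set.Icc 0 (t + 1))
    (bound := (Metric.closedBall 0 (t + 1 + R)).indicator fun _ => M)
    (Icc_mem_nhds ht (lt_add_one t)) (.of_forall fun s => ?_)
    (hs.integrable_slice hf.continuous ht.le) ?_ (.of_forall fun x s hst => ?_) ?_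
    (.of_forall fun x s _ => ?_)).2
  · exact (hf.continuous.comp (by fun_prop)).aestronglyMeasurable
  · exact (hdt.comp (by fun_prop)).aestronglyMeasurable
  · by_cases hx : x ∈ Metric.closedBall 0 (t + 1 + R)
    · rw [Set.indicator_of_mem hx]
      exact hM (s, x) ⟨hst, hx⟩
    · rw [Set.indicator_of_notMem hx, norm_le_zero_iff]
      rw [mem_closedBall_zero_iff, not_le] at hx
      exact supportedInCone_dirD hs hf _ (s, x) hst.1 (by linarith [hst.2])
  · exact (integrable_indicator_iff measurableSet_closedBall).2
      (integrableOn_const (isCompact_closedBall _ _).measure_lt_top.ne)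
  · exact (hf.differentiable one_ne_zero (s, x)).hasFDerivAt.comp_hasDerivAt s
      ((hasDerivAt_id s).prodMk (hasDerivAt_const s x))

lemma integral_dirD_space_eq_zero (hs : SupportedInCone R f) (hf : ContDiff ℝ 1 f) (ht : 0 ≤ t)
    (w : Spc n) : ∫ x, dirD (0, w) f (t, x) = 0 := by
  have hslice : ∀ x, HasFDerivAt (fun y => f (t, y))
      ((fderiv ℝ f (t, x)).comp (ContinuousLinearMap.inr ℝ ℝ (Spc n))) x := fun x =>
    (hf.differentiable one_ne_zero (t, x)).hasFDerivAt.comp x (hasFDerivAt_prodMk_right t x)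
  have hfderiv : ∀ x, fderiv ℝ (fun y => f (t, y)) x w = dirD (0, w) f (t, x) := fun x => by
    rw [(hslice x).fderiv]
    rfl
  have := integral_mul_fderiv_eq_neg_fderiv_mul_of_integrable (μ := volume) (f := fun _ => (1 : ℝ))
    (g := fun x => f (t, x)) (v := w) (by simp)
    (by simpa [hfderiv] using
      (supportedInCone_dirD hs hf (0, w)).integrable_slice (continuous_dirD hf _) ht)
    (by simpa using hs.integrable_slice hf.continuous ht) (by simp)
    (fun x _ => (hslice x).differentiableAt)
  simpa [hfderiv] using this

lemma hasDerivAt_integral_wronskian (hs : SupportedInCone R u) (hu : ContDiff ℝ 2 u)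
    (hψ : ContDiff ℝ 2 ψ) (ht : 0 < t) :
    HasDerivAt (fun s => ∫ x, wronskian (1, 0) u ψ (s, x))
      (∫ x, (boxD u (t, x) * ψ (t, x) - u (t, x) * boxD ψ (t, x))) t := by
  have hW (w : STn n) : SupportedInCone R (wronskian w u ψ) :=
    supportedInCone_wronskian hs (hu.of_le one_le_two) w ψ
  have hWc (w : STn n) : ContDiff ℝ 1 (wronskian w u ψ) := contDiff_wronskian hu hψ w
  have hint (w : STn n) : Integrable fun x => dirD w (wronskian w u ψ) (t, x) :=
    (supportedInCone_dirD (hW w) (hWc w) w).integrable_slice (continuous_dirD (hWc w) w) ht.le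
  refine ((hW _).hasDerivAt_integral (hWc _) ht).congr_deriv ?_
  simp_rw [boxD_mul_sub_mul_boxD hu hψ, dtD, dxD]
  rw [integral_sub (hint _) (integrable_finsetSum _ fun j _ => hint _),
    integral_finsetSum _ fun j _ => hint _,
    Finset.sum_eq_zero fun j _ => (hW _).integral_dirD_space_eq_zero (hWc _) ht.le _, sub_zero]

lemma integral_wronskian_le (hs : SupportedInCone R u) (hu : ContDiff ℝ 2 u)
    (hψ : ContDiff ℝ 2 ψ) (hbox : ∀ z : STn n, 0 < z.1 → 0 ≤ boxD u z)
    (hψ₀ : ∀ z, 0 ≤ ψ z) (hψbox : ∀ z, boxD ψ z = 0) (ht : 0 ≤ t) :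
    ∫ x, wronskian (1, 0) u ψ (0, x) ≤ ∫ x, wronskian (1, 0) u ψ (t, x) := by
  have hmono : MonotoneOn (fun s => ∫ x, wronskian (1, 0) u ψ (s, x)) (Set.Icc 0 t) := by
    have hder (s) (h : s ∈ interior (Set.Icc 0 t)) :=
      hs.hasDerivAt_integral_wronskian hu hψ (interior_Icc.subset h).1
    refine monotoneOn_of_deriv_nonneg (convex_Icc 0 t)
      ((supportedInCone_wronskian hs (hu.of_le one_le_two) _ ψ).continuousOn_integral
        (contDiff_wronskian hu hψ _).continuous t)
      (fun s h => (hder s h).differentiableAt.differentiableWithinAt) fun s h => ?_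
    rw [(hder s h).deriv]
    refine integral_nonneg fun x => ?_
    rw [hψbox, mul_zero, sub_zero]
    exact mul_nonneg (hbox _ (interior_Icc.subset h).1) (hψ₀ _)
  exact hmono (Set.left_mem_Icc.2 ht) (Set.right_mem_Icc.2 ht) ht

end SupportedInCone

end Green

/-! ### Plane waves -/

section PlaneWaves

variable {n : ℕ} {h : ℝ → ℝ} {θ : Spc n} {σ c : ℝ}

/-- The linear form `(t, x) ↦ ⟨θ, x⟩ + σ t`, which is null for the d'Alembertian when
`‖θ‖ = |σ|`. -/
noncomputable def phase (θ : Spc n) (σ : ℝ) : STn n →L[ℝ] ℝ :=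
  (innerSL ℝ θ).comp (.snd ℝ ℝ (Spc n)) + σ • .fst ℝ ℝ (Spc n)

lemma phase_apply (θ : Spc n) (σ : ℝ) (z : STn n) : phase θ σ z = inner ℝ θ z.2 + σ * z.1 := rfl

/-- The plane wave with profile `h`, direction `θ`, speed `-σ` and shift `c`. -/
noncomputable def planeWave (h : ℝ → ℝ) (θ : Spc n) (σ c : ℝ) : STn n → ℝ :=
  fun z => h (phase θ σ z + c)

lemma contDiff_planeWave {m : WithTop ℕ∞} (hh : ContDiff ℝ m h) (θ : Spc n) (σ c : ℝ) :
    ContDiff ℝ m (planeWave h θ σ c) :=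
  hh.comp ((phase θ σ).contDiff.add contDiff_const)

lemma dirD_planeWave (hh : Differentiable ℝ h) (θ : Spc n) (σ c : ℝ) (w : STn n) :
    dirD w (planeWave h θ σ c) = fun z => phase θ σ w * planeWave (deriv h) θ σ c z := by
  funext z
  have hcomp := (hh (phase θ σ z + c)).hasDerivAt.comp_hasFDerivAt z
    ((phase θ σ).hasFDerivAt.add_const c)
  rw [dirD, show fderiv ℝ (planeWave h θ σ c) z = _ from hcomp.fderiv, smul_apply, smul_eq_mul,
    mul_comm, planeWave]

lemma dirD_dirD_planeWave (hh : ContDiff ℝ 2 h) (θ : Spc n) (σ c : ℝ) (w z : STn n) :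
    dirD w (dirD w (planeWave h θ σ c)) z
      = phase θ σ w ^ 2 * planeWave (deriv (deriv h)) θ σ c z := by
  have hh' : ContDiff ℝ 1 (deriv h) :=
    (contDiff_succ_iff_deriv.1 (one_add_one_eq_two (R := WithTop ℕ∞) ▸ hh)).2.2
  rw [dirD_planeWave (hh.differentiable two_ne_zero), dirD, fderiv_const_mul
    ((contDiff_planeWave hh' θ σ c).differentiable one_ne_zero z), smul_apply, smul_eq_mul,
    ← dirD, dirD_planeWave (hh'.differentiable one_ne_zero), sq, mul_assoc]

lemma boxD_planeWave (hh : ContDiff ℝ 2 h) (hθ : ‖θ‖ ^ 2 = σ ^ 2) (c : ℝ) (z : STn n) :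
    boxD (planeWave h θ σ c) z = 0 := by
  simp only [boxD, lapD, dtD, dxD, dirD_dirD_planeWave hh, ← Finset.sum_mul, phase_apply,
    EuclideanSpace.inner_single_right, inner_zero_right, conj_trivial, one_mul, mul_one, mul_zero,
    zero_add, add_zero, ← hθ, EuclideanSpace.real_norm_sq_eq, sub_self]

lemma wronskian_planeWave (hh : Differentiable ℝ h) (u : STn n → ℝ) (t : ℝ) (x : Spc n) :
    wronskian (1, 0) u (planeWave h θ σ c) (t, x)
      = dtD u (t, x) * h (inner ℝ θ x + σ * t + c)
        - u (t, x) * (σ * deriv h (inner ℝ θ x + σ * t + c)) := by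
  simp only [wronskian, dirD_planeWave hh, planeWave, phase_apply, inner_zero_right, zero_add,
    mul_one, dtD]

/-- The outgoing wave `h (⟨θ, x⟩ - t)` and the incoming wave `h (⟨θ, x⟩ + t - 2 T)` agree at time
`T` and have opposite time derivatives there, so the sum of their fluxes does not involve `u`. -/
lemma integral_wronskian_outgoing_add_incoming_le {u : STn n → ℝ} {R T : ℝ} (hu : ContDiff ℝ 2 u)
    (hs : SupportedInCone R u) (hbox : ∀ z : STn n, 0 < z.1 → 0 ≤ boxD u z) (hT : 0 ≤ T)
    (hh : ContDiff ℝ 2 h) (hh₀ : ∀ s, 0 ≤ h s) (hθ : ‖θ‖ = 1) :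
    (∫ x, wronskian (1, 0) u (planeWave h θ (-1) 0) (0, x))
        + ∫ x, wronskian (1, 0) u (planeWave h θ 1 (-(2 * T))) (0, x)
      ≤ 2 * ∫ x, dtD u (T, x) * h (inner ℝ θ x - T) := by
  have hψ (σ c) : ContDiff ℝ 2 (planeWave h θ σ c) := contDiff_planeWave hh θ σ c
  have hmono (σ c : ℝ) (hσ : σ ^ 2 = 1) := hs.integral_wronskian_le hu (hψ σ c) hbox
    (fun _ => hh₀ _) (boxD_planeWave hh (by rw [hθ, hσ, one_pow]) c) hT
  have hint (σ c) : Integrable fun x => wronskian (1, 0) u (planeWave h θ σ c) (T, x) :=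
    (supportedInCone_wronskian hs (hu.of_le one_le_two) _ _).integrable_slice
      (contDiff_wronskian hu (hψ σ c) _).continuous hT
  refine (add_le_add (hmono (-1) 0 (by norm_num)) (hmono 1 (-(2 * T)) (by norm_num))).trans_eq ?_
  rw [← integral_add (hint _ _) (hint _ _), ← integral_const_mul]
  refine integral_congr_ae (.of_forall fun x => ?_)
  simp only [wronskian_planeWave (hh.differentiable two_ne_zero)]
  rw [show inner ℝ θ x + -1 * T + 0 = inner ℝ θ x - T by ring,
    show inner ℝ θ x + 1 * T + -(2 * T) = inner ℝ θ x - T by ring]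
  ring

end PlaneWaves

/-! ### Growth of the time derivative near the light cone -/

section Shell

open Filter Asymptotics

variable {n : ℕ} {u : STn n → ℝ} {R T r : ℝ} {θ : Spc n}

/-- A smooth step vanishing on `(-∞, -R - 1]` and equal to `1` on `[-R, ∞)`, the profile of the test
waves. -/
noncomputable def cutoff (R s : ℝ) : ℝ := Real.smoothTransition (s + R + 1)

lemma contDiff_cutoff {m : ℕ∞} : ContDiff ℝ m (cutoff R) :=
  Real.smoothTransition.contDiff.comp ((contDiff_id.add contDiff_const).add contDiff_const)

lemma cutoff_nonneg (R s : ℝ) : 0 ≤ cutoff R s := Real.smoothTransition.nonneg _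

lemma cutoff_le_one (R s : ℝ) : cutoff R s ≤ 1 := Real.smoothTransition.le_one _

lemma cutoff_eq_zero {s : ℝ} (h : s ≤ -R - 1) : cutoff R s = 0 :=
  Real.smoothTransition.zero_of_nonpos (by linarith)

lemma cutoff_eq_one {s : ℝ} (h : -R ≤ s) : cutoff R s = 1 :=
  Real.smoothTransition.one_of_one_le (by linarith)

lemma deriv_cutoff_eq_zero_of_le {s : ℝ} (h : s ≤ -R - 1) : deriv (cutoff R) s = 0 :=
  IsLocalMin.deriv_eq_zero (.of_forall fun y => by rw [cutoff_eq_zero h]; exact cutoff_nonneg R y)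

lemma deriv_cutoff_eq_zero_of_ge {s : ℝ} (h : -R ≤ s) : deriv (cutoff R) s = 0 :=
  IsLocalMax.deriv_eq_zero (.of_forall fun y => by rw [cutoff_eq_one h]; exact cutoff_le_one R y)

lemma abs_inner_le_of_norm_eq_one (hθ : ‖θ‖ = 1) (x : Spc n) : |inner ℝ θ x| ≤ ‖x‖ := by
  simpa [hθ] using abs_real_inner_le_norm θ x

/-- At time `0` the outgoing test wave is `1` and the incoming one `0` on the support of `u`. -/
lemma integral_dtD_le_two_mul_integral_mul_cutoff (hu : ContDiff ℝ 2 u) (hs : SupportedInCone R u)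
    (hbox : ∀ z : STn n, 0 < z.1 → 0 ≤ boxD u z) (hT₀ : 0 ≤ T) (hT : R + 1 / 2 ≤ T)
    (hθ : ‖θ‖ = 1) :
    ∫ x, dtD u (0, x) ≤ 2 * ∫ x, dtD u (T, x) * cutoff R (inner ℝ θ x - T) := by
  have hcd : Differentiable ℝ (cutoff R) := (contDiff_cutoff (m := 2)).differentiable two_ne_zero
  have hs' := supportedInCone_dirD hs (hu.of_le one_le_two) (1, 0)
  have hout : ∀ x, wronskian (1, 0) u (planeWave (cutoff R) θ (-1) 0) (0, x) = dtD u (0, x) := by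
    intro x
    rw [wronskian_planeWave hcd]
    rcases le_or_gt ‖x‖ R with hx | hx
    · have : -R ≤ inner ℝ θ x :=
        (neg_le_neg hx).trans (abs_le.1 (abs_inner_le_of_norm_eq_one hθ x)).1
      rw [mul_zero, add_zero, add_zero, cutoff_eq_one this, deriv_cutoff_eq_zero_of_ge this]
      ring
    · rw [hs (0, x) le_rfl (by simpa using hx), dtD, hs' (0, x) le_rfl (by simpa using hx)]
      ring
  have hin : ∀ x, wronskian (1, 0) u (planeWave (cutoff R) θ 1 (-(2 * T))) (0, x) = 0 := by
    intro x
    rw [wronskian_planeWave hcd]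
    rcases le_or_gt ‖x‖ R with hx | hx
    · have : inner ℝ θ x + 1 * 0 + -(2 * T) ≤ -R - 1 := by
        linarith [(abs_le.1 (abs_inner_le_of_norm_eq_one hθ x)).2]
      rw [cutoff_eq_zero this, deriv_cutoff_eq_zero_of_le this]
      ring
    · rw [hs (0, x) le_rfl (by simpa using hx), dtD, hs' (0, x) le_rfl (by simpa using hx)]
      ring
  simpa [hout, hin] using integral_wronskian_outgoing_add_incoming_le hu hs hbox hT₀
    contDiff_cutoff (cutoff_nonneg R) hθ

/-- The shell around the light cone at time `T` in which a plane wave with profile `cutoff R` can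
meet the support of `u`. -/
def coneShell (n : ℕ) (R T : ℝ) : Set (Spc n) :=
  Metric.closedBall 0 (T + R) \ Metric.closedBall 0 (T - R - 1)

lemma measurableSet_coneShell : MeasurableSet (coneShell n R T) :=
  measurableSet_closedBall.diff measurableSet_closedBall

lemma measure_coneShell_lt_top : volume (coneShell n R T) < ⊤ :=
  (measure_mono Set.sdiff_subset).trans_lt (isCompact_closedBall _ _).measure_lt_top

lemma integral_dtD_div_two_le_setIntegral_abs (hu : ContDiff ℝ 2 u) (hs : SupportedInCone R u)
    (hbox : ∀ z : STn n, 0 < z.1 → 0 ≤ boxD u z) (hT₀ : 0 ≤ T) (hT : R + 1 / 2 ≤ T) (hθ : θ ≠ 0) :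
    (∫ x, dtD u (0, x)) / 2
      ≤ ∫ x in {x | (T - R - 1) * ‖θ‖ < inner ℝ x θ} ∩ coneShell n R T, |dtD u (T, x)| := by
  set e := ‖θ‖⁻¹ • θ with he
  have hen : ‖e‖ = 1 := norm_smul_inv_norm (𝕜 := ℝ) hθ
  have hs' := supportedInCone_dirD hs (hu.of_le one_le_two) (1, 0)
  have hdt : Continuous (dtD u) := continuous_dirD (hu.of_le one_le_two) _
  set S := {x | (T - R - 1) * ‖θ‖ < inner ℝ x θ} ∩ coneShell n R T
  have hS : MeasurableSet S :=
    (measurableSet_lt measurable_const (by fun_prop)).inter measurableSet_coneShell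
  have hmem : ∀ x, dtD u (T, x) * cutoff R (inner ℝ e x - T) ≠ 0 → x ∈ S := by
    intro x hx
    have hxT : ‖x‖ ≤ T + R := not_lt.1 fun h => left_ne_zero_of_mul hx (hs' (T, x) hT₀ h)
    have hxe : T - R - 1 < inner ℝ e x :=
      not_le.1 fun h => right_ne_zero_of_mul hx (cutoff_eq_zero (by linarith))
    refine ⟨?_, by simpa using hxT, ?_⟩
    · rwa [he, real_inner_smul_left, ← div_eq_inv_mul, lt_div_iff₀ (norm_pos_iff.2 hθ),
        real_inner_comm] at hxe
    · rw [mem_closedBall_zero_iff, not_le]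
      exact hxe.trans_le ((le_abs_self _).trans (abs_inner_le_of_norm_eq_one hen x))
  rw [← integral_indicator hS, div_le_iff₀' two_pos]
  refine (integral_dtD_le_two_mul_integral_mul_cutoff hu hs hbox hT₀ hT hen).trans
    (mul_le_mul_of_nonneg_left (integral_mono ?_ ?_ fun x => ?_) zero_le_two)
  · have hc : Continuous (cutoff R) := (contDiff_cutoff (m := 0)).continuous
    exact Continuous.integrable_of_hasCompactSupport (by fun_prop)
      (hs'.hasCompactSupport_slice hT₀).mul_right
  · exact (integrable_indicator_iff hS).2 (hs'.integrable_slice hdt hT₀).abs.integrableOn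
  · by_cases hx : dtD u (T, x) * cutoff R (inner ℝ e x - T) = 0
    · simp only [hx]
      exact Set.indicator_nonneg (fun _ _ => abs_nonneg _) x
    · rw [Set.indicator_of_mem (hmem x hx)]
      refine (le_abs_self _).trans ?_
      rw [abs_mul, abs_of_nonneg (cutoff_nonneg R _)]
      exact mul_le_of_le_one_right (abs_nonneg _) (cutoff_le_one R _)

/-- Averages the bound for a single direction `θ` over the unit ball, using that each point of the
shell is seen only by the `θ` in a thin cap. -/
lemma ofReal_integral_dtD_mul_measure_ball_le (hu : ContDiff ℝ 2 u) (hs : SupportedInCone R u)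
    (hbox : ∀ z : STn n, 0 < z.1 → 0 ≤ boxD u z) (hn : 1 ≤ n) (hR : 0 ≤ R) (hT : R + 1 ≤ T) :
    ENNReal.ofReal ((∫ x, dtD u (0, x)) / 2) * volume (Metric.ball (0 : Spc n) 1)
      ≤ ENNReal.ofReal (√(2 * (2 * R + 1) / (T + R)) ^ (n - 1))
        * volume (Metric.closedBall (0 : Spc n) 2)
        * ENNReal.ofReal (∫ x in coneShell n R T, |dtD u (T, x)|) := by
  have hT₀ : 0 ≤ T := by linarith
  have : Nonempty (Fin n) := ⟨⟨0, hn⟩⟩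
  have hdt : Continuous (dtD u) := continuous_dirD (hu.of_le one_le_two) _
  have hint : Integrable fun x => |dtD u (T, x)| :=
    ((supportedInCone_dirD hs (hu.of_le one_le_two) (1, 0)).integrable_slice hdt hT₀).abs
  have hofReal (S : Set (Spc n)) : ENNReal.ofReal (∫ x in S, |dtD u (T, x)|)
      = ∫⁻ x in S, ENNReal.ofReal |dtD u (T, x)| :=
    ofReal_integral_eq_lintegral_ofReal hint.integrableOn (.of_forall fun _ => abs_nonneg _)
  set A := {z : Spc n × Spc n | (T - R - 1) * ‖z.1‖ < inner ℝ z.2 z.1}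
  have hA : MeasurableSet A := measurableSet_lt (by fun_prop) (by fun_prop)
  rw [hofReal, ← Measure.restrict_apply_univ (Metric.ball (0 : Spc n) 1)]
  refine mul_measure_univ_le_mul_lintegral hA (by fun_prop) ?_ ?_
  · filter_upwards [Measure.ae_ne (volume.restrict (Metric.ball 0 1)) (0 : Spc n)] with θ hθ
    have hAθ : MeasurableSet {x | (θ, x) ∈ A} := measurable_prodMk_left hA
    rw [Measure.restrict_restrict hAθ, ← hofReal]
    exact ENNReal.ofReal_le_ofReal
      (integral_dtD_div_two_le_setIntegral_abs hu hs hbox hT₀ (by linarith) hθ)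
  · filter_upwards [ae_restrict_mem measurableSet_coneShell] with x hx
    have hAx : MeasurableSet {θ | (θ, x) ∈ A} := measurable_prodMk_right hA
    rw [Measure.restrict_apply hAx, Set.inter_comm]
    have hcap := measure_cap_le (volume : Measure (Spc n)) (a := T - R - 1) (b := T + R)
      (by linarith) (by linarith) (x := x) (by simpa using hx.1)
    rwa [finrank_euclideanSpace_fin,
      show T + R - (T - R - 1) = 2 * R + 1 by ring] at hcap

lemma integral_dtD_mul_measureReal_ball_le (hu : ContDiff ℝ 2 u) (hs : SupportedInCone R u)
    (hbox : ∀ z : STn n, 0 < z.1 → 0 ≤ boxD u z) (hn : 1 ≤ n) (hR : 0 ≤ R) (hT : R + 1 ≤ T) :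
    (∫ x, dtD u (0, x)) / 2 * volume.real (Metric.ball (0 : Spc n) 1)
      ≤ √(2 * (2 * R + 1) / (T + R)) ^ (n - 1) * volume.real (Metric.closedBall (0 : Spc n) 2)
        * ∫ x in coneShell n R T, |dtD u (T, x)| := by
  have hball : volume (Metric.closedBall (0 : Spc n) 2) ≠ ⊤ :=
    (isCompact_closedBall _ _).measure_ne_top
  have h := ENNReal.toReal_mono (by finiteness)
    (ofReal_integral_dtD_mul_measure_ball_le hu hs hbox hn hR hT)
  rw [ENNReal.toReal_mul, ENNReal.toReal_mul, ENNReal.toReal_mul, ENNReal.toReal_ofReal',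
    ENNReal.toReal_ofReal (by positivity), ENNReal.toReal_ofReal (by positivity)] at h
  exact (mul_le_mul_of_nonneg_right (le_max_left _ _) measureReal_nonneg).trans h

lemma add_const_pow_isBigO (k : ℕ) (R : ℝ) :
    (fun t : ℝ => (t + R) ^ k) =O[atTop] fun t => t ^ (k : ℝ) := by
  simp only [Real.rpow_natCast]
  exact ((isBigO_refl (fun t : ℝ => t) atTop).add (isLittleO_const_id_atTop R).isBigO).pow k

lemma measureReal_closedBall_isBigO (R : ℝ) :
    (fun t => volume.real (Metric.closedBall (0 : Spc n) (t + R))) =O[atTop]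
      fun t => t ^ (n : ℝ) := by
  refine (((add_const_pow_isBigO n R).const_mul_left
    (volume.real (Metric.ball (0 : Spc n) 1))).congr' ?_ .rfl)
  filter_upwards [eventually_ge_atTop (-R)] with t ht
  rw [Measure.addHaar_real_closedBall _ _ (by linarith), finrank_euclideanSpace_fin, mul_comm]

lemma measureReal_coneShell_isBigO (hn : 1 ≤ n) (hR : 0 ≤ R) :
    (fun t => volume.real (coneShell n R t)) =O[atTop] fun t => t ^ ((n : ℝ) - 1) := by
  have hpow := add_const_pow_isBigO (n - 1) R
  rw [Nat.cast_sub hn, Nat.cast_one] at hpow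
  refine IsBigO.trans
    (.of_bound ((2 * R + 1) * n * volume.real (Metric.ball (0 : Spc n) 1)) ?_) hpow
  filter_upwards [eventually_ge_atTop (R + 1)] with t ht
  have ht₀ : 0 ≤ t := by linarith
  have h := measureReal_closedBall_diff_closedBall_le (volume : Measure (Spc n))
    (a := t - R - 1) (b := t + R) (by linarith) (by linarith)
  rw [finrank_euclideanSpace_fin] at h
  rw [Real.norm_of_nonneg measureReal_nonneg, Real.norm_of_nonneg (by positivity)]
  refine h.trans_eq ?_
  ring

lemma rpow_isBigO_setIntegral_coneShell_abs_dtD (hu : ContDiff ℝ 2 u) (hs : SupportedInCone R u)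
    (hbox : ∀ z : STn n, 0 < z.1 → 0 ≤ boxD u z) (hn : 1 ≤ n) (hR : 0 ≤ R)
    (hpos : 0 < ∫ x, dtD u (0, x)) :
    (fun t => t ^ (((n : ℝ) - 1) / 2)) =O[atTop]
      fun t => ∫ x in coneShell n R t, |dtD u (t, x)| := by
  set c := (∫ x, dtD u (0, x)) / 2 * volume.real (Metric.ball (0 : Spc n) 1)
  have hc : 0 < c := mul_pos (half_pos hpos) <| ENNReal.toReal_pos
    (Metric.measure_ball_pos _ _ one_pos).ne' measure_ball_lt_top.ne
  set C := √(2 * (2 * R + 1)) ^ (n - 1) * volume.real (Metric.closedBall (0 : Spc n) 2)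
  refine .of_bound (C / c) ?_
  filter_upwards [eventually_ge_atTop (R + 1)] with t ht
  have ht₀ : 0 < t := by linarith
  have hpow : t ^ (((n : ℝ) - 1) / 2) = √t ^ (n - 1) := by
    rw [Real.sqrt_eq_rpow, ← Real.rpow_natCast, ← Real.rpow_mul ht₀.le, Nat.cast_sub hn,
      Nat.cast_one, one_div_mul_eq_div]
  have hI : 0 ≤ ∫ x in coneShell n R t, |dtD u (t, x)| := integral_nonneg fun _ => abs_nonneg _
  rw [Real.norm_of_nonneg hI, Real.norm_of_nonneg (by positivity), hpow, div_mul_eq_mul_div,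
    le_div_iff₀ hc]
  calc √t ^ (n - 1) * c
      ≤ √t ^ (n - 1) * (√(2 * (2 * R + 1) / (t + R)) ^ (n - 1)
          * volume.real (Metric.closedBall (0 : Spc n) 2)
          * ∫ x in coneShell n R t, |dtD u (t, x)|) := by
        gcongr
        exact integral_dtD_mul_measureReal_ball_le hu hs hbox hn hR ht
    _ ≤ √t ^ (n - 1) * ((√(2 * (2 * R + 1)) / √t) ^ (n - 1)
          * volume.real (Metric.closedBall (0 : Spc n) 2)
          * ∫ x in coneShell n R t, |dtD u (t, x)|) := by
        rw [← Real.sqrt_div (by positivity)]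
        gcongr
        linarith
    _ = C * ∫ x in coneShell n R t, |dtD u (t, x)| := by
        rw [div_pow, ← mul_assoc, ← mul_assoc, mul_div_cancel₀ _ (by positivity)]

lemma rpow_isBigO_integral_abs_dtD_rpow (hu : ContDiff ℝ 2 u) (hs : SupportedInCone R u)
    (hbox : ∀ z : STn n, 0 < z.1 → 0 ≤ boxD u z) (hn : 1 ≤ n) (hR : 0 ≤ R)
    (hpos : 0 < ∫ x, dtD u (0, x)) (hr : 1 < r) :
    (fun t => t ^ (((n : ℝ) - 1) * (1 - r / 2))) =O[atTop] fun t => ∫ x, |dtD u (t, x)| ^ r := by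
  have hdt : Continuous (dtD u) := continuous_dirD (hu.of_le one_le_two) _
  have hs' : SupportedInCone R (dtD u) := supportedInCone_dirD hs (hu.of_le one_le_two) _
  have hHolder : ∀ᶠ t in atTop, |(∫ x in coneShell n R t, |dtD u (t, x)|)| ^ r
      ≤ volume.real (coneShell n R t) ^ (r - 1) * ∫ x, |dtD u (t, x)| ^ r := by
    filter_upwards [eventually_ge_atTop 0] with t ht
    rw [abs_of_nonneg (integral_nonneg fun _ => abs_nonneg _)]
    exact setIntegral_abs_rpow_le hr (Continuous.memLp_of_hasCompactSupport (by fun_prop)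
      (hs'.hasCompactSupport_slice ht)) measure_coneShell_lt_top.ne
  refine (isBigO_rpow_of_weighted (zero_le_one.trans hr.le)
    (rpow_isBigO_setIntegral_coneShell_abs_dtD hu hs hbox hn hR hpos)
    (rpow_neg_mul_rpow_isBigO hr.le (measureReal_coneShell_isBigO hn hR) hHolder)).congr_left
    fun t => ?_
  ring_nf

end Shell

/-! ### Spatial means of solutions -/

section Means

open Filter Asymptotics

variable {n : ℕ} {u v w : STn n → ℝ} {R r : ℝ}

lemma SupportedInCone.rpow_mul_abs_integral_rpow_isBigO (hs : SupportedInCone R w)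
    (hw : Continuous w) (hr : 1 < r) :
    (fun t => t ^ (-(n * (r - 1))) * |∫ x, w (t, x)| ^ r) =O[atTop]
      fun t => ∫ x, |w (t, x)| ^ r := by
  refine rpow_neg_mul_rpow_isBigO hr.le (measureReal_closedBall_isBigO R) ?_
  filter_upwards [eventually_ge_atTop 0] with t ht
  have hball : ∫ x in Metric.closedBall 0 (t + R), |w (t, x)| = ∫ x, |w (t, x)| :=
    setIntegral_eq_integral_of_forall_compl_eq_zero fun x hx => by
      rw [hs (t, x) ht (by simpa using hx), abs_zero]
  calc |∫ x, w (t, x)| ^ r ≤ (∫ x in Metric.closedBall 0 (t + R), |w (t, x)|) ^ r := by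
        rw [hball]
        gcongr
        exact abs_integral_le_integral_abs
    _ ≤ _ := setIntegral_abs_rpow_le hr (Continuous.memLp_of_hasCompactSupport (by fun_prop)
        (hs.hasCompactSupport_slice ht)) (isCompact_closedBall _ _).measure_ne_top

lemma integral_abs_rpow_isBigO_integral_boxD (hr : 0 < r) (hw : Continuous w)
    (hws : SupportedInCone R w) (hv : ContDiff ℝ 2 v) (hvs : SupportedInCone R v)
    (h : ∀ z : STn n, 0 < z.1 → |w z| ^ r ≤ boxD v z) :
    (fun t => ∫ x, |w (t, x)| ^ r) =O[atTop] fun t => ∫ x, boxD v (t, x) := by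
  refine .of_bound' ?_
  filter_upwards [eventually_gt_atTop 0] with t ht
  rw [Real.norm_of_nonneg (integral_nonneg fun _ => by positivity)]
  refine (integral_mono ((hws.abs_rpow hr.ne').integrable_slice
    (hw.abs.rpow_const fun _ => .inr hr.le) ht.le) ?_ fun x => h (t, x) ht).trans (le_abs_self _)
  exact (supportedInCone_boxD hvs hv).integrable_slice (continuous_boxD hv) ht.le

lemma dirD_one (e : STn n) : dirD e (1 : STn n → ℝ) = 0 := by
  ext z
  simp [dirD]

lemma wronskian_one (e : STn n) (u : STn n → ℝ) : wronskian e u 1 = dirD e u := by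
  ext z
  simp [wronskian, dirD_one]

lemma boxD_one : boxD (1 : STn n → ℝ) = 0 := by
  ext z
  simp [boxD, lapD, dtD, dxD, dirD_one, dirD]

lemma SupportedInCone.convexAtTop_integral (hs : SupportedInCone R u) (hu : ContDiff ℝ 2 u)
    (hbox : ∀ z : STn n, 0 < z.1 → 0 ≤ boxD u z) (hpos : 0 < ∫ x, dtD u (0, x)) :
    ConvexAtTop (fun t => ∫ x, u (t, x)) (fun t => ∫ x, dtD u (t, x))
      fun t => ∫ x, boxD u (t, x) := by
  have hderiv : ∀ t > 0, HasDerivAt (fun s => ∫ x, u (s, x)) (∫ x, dtD u (t, x)) t :=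
    fun t ht => hs.hasDerivAt_integral (hu.of_le one_le_two) ht
  have hderiv' : ∀ t > 0, HasDerivAt (fun s => ∫ x, dtD u (s, x)) (∫ x, boxD u (t, x)) t := by
    intro t ht
    simpa [wronskian_one, boxD_one, dtD] using
      hs.hasDerivAt_integral_wronskian hu (ψ := 1) contDiff_const ht
  have hmono : ∀ t ≥ 0, ∫ x, dtD u (0, x) ≤ ∫ x, dtD u (t, x) := by
    intro t ht
    simpa only [wronskian_one, dtD] using hs.integral_wronskian_le hu (ψ := 1) contDiff_const hbox
      (fun _ => zero_le_one) (fun _ => by rw [boxD_one, Pi.zero_apply]) ht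
  exact
    { hasDerivAt := (eventually_gt_atTop 0).mono hderiv
      hasDerivAt' := (eventually_gt_atTop 0).mono hderiv'
      deriv_nonneg := (eventually_ge_atTop 0).mono fun t ht => hpos.le.trans (hmono t ht)
      deriv2_nonneg := (eventually_gt_atTop 0).mono fun t ht =>
        integral_nonneg fun x => hbox (t, x) ht
      tendsto_atTop := tendsto_atTop_of_hasDerivAt_ge hpos hderiv fun t ht => hmono t ht.le }

end Means

theorem blow_up_general {n : ℕ} (hn : 1 ≤ n) {p q r R : ℝ} (hp : 1 < p) (hq : 1 < q) (hr : 1 < r)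
    (hpqr : (p * q - 1) * (((n : ℝ) - 1) * r / 2 - 1) < 2 * (q + 1)) {u v : STn n → ℝ}
    (hu : ContDiff ℝ 2 u) (hv : ContDiff ℝ 2 v)
    (hus : SupportedInCone R u) (hvs : SupportedInCone R v)
    (hbu : ∀ z : STn n, 0 < z.1 → |v z| ^ p ≤ boxD u z)
    (hbv : ∀ z : STn n, 0 < z.1 → |u z| ^ q ≤ boxD v z)
    (hbv' : ∀ z : STn n, 0 < z.1 → |dtD u z| ^ r ≤ boxD v z)
    (hupos : 0 < ∫ x, dtD u (0, x)) (hvpos : 0 < ∫ x, dtD v (0, x)) : False := by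
  have hbox_u : ∀ z : STn n, 0 < z.1 → 0 ≤ boxD u z := fun z hz =>
    (Real.rpow_nonneg (abs_nonneg _) _).trans (hbu z hz)
  have hbox_v : ∀ z : STn n, 0 < z.1 → 0 ≤ boxD v z := fun z hz =>
    (Real.rpow_nonneg (abs_nonneg _) _).trans (hbv z hz)
  have hdu : Continuous (dtD u) := continuous_dirD (hu.of_le one_le_two) _
  have hdus : SupportedInCone R (dtD u) := supportedInCone_dirD hus (hu.of_le one_le_two) _
  refine false_of_convexAtTop_system (N := n) (β := ((n : ℝ) - 1) * (1 - r / 2)) hp hq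
    (lt_of_eq_of_lt (by ring) hpqr) (hus.convexAtTop_integral hu hbox_u hupos)
    (hvs.convexAtTop_integral hv hbox_v hvpos) ?_ ?_ ?_
  · exact (hvs.rpow_mul_abs_integral_rpow_isBigO hv.continuous hp).trans
      (integral_abs_rpow_isBigO_integral_boxD (by linarith) hv.continuous hvs hu hus hbu)
  · exact (hus.rpow_mul_abs_integral_rpow_isBigO hu.continuous hq).trans
      (integral_abs_rpow_isBigO_integral_boxD (by linarith) hu.continuous hus hv hvs hbv)
  · exact (rpow_isBigO_integral_abs_dtD_rpow hu (hus.mono (le_max_left R 0)) hbox_u hn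
      (le_max_right R 0) hupos hr).trans
      (integral_abs_rpow_isBigO_integral_boxD (by linarith) hdu hdus hv hvs hbv')

/-- Blow up for the system □u = |v|^p, □v = |u|^q + |∂_t u|^{(n+1)/(n-1)}
(Theorem 2.1 of Hidano–Yokoyama). -/
theorem blow_up (n : ℕ) (hn : 2 ≤ n) (p q : ℝ) (hp : 1 < p) (hq : 1 < q)
    (hpq : 0 < 4 * q - ((n : ℝ) - 1) * p * q + n + 3)
    (f₁ g₁ f₂ g₂ : Spc n → ℝ)
    (hf₁ : ContDiff ℝ ∞ f₁) (hf₁c : HasCompactSupport f₁)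
    (hg₁ : ContDiff ℝ ∞ g₁) (hg₁c : HasCompactSupport g₁)
    (hf₂ : ContDiff ℝ ∞ f₂) (hf₂c : HasCompactSupport f₂)
    (hg₂ : ContDiff ℝ ∞ g₂) (hg₂c : HasCompactSupport g₂)
    (hg₁pos : 0 < ∫ x, g₁ x) (hg₂pos : 0 < ∫ x, g₂ x)
    (ε : ℝ) (hε : 0 < ε) :
    ¬ ∃ u v : STn n → ℝ, ContDiff ℝ 2 u ∧ ContDiff ℝ 2 v ∧
      (∀ z : STn n, 0 < z.1 → boxD u z = |v z| ^ p) ∧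
      (∀ z : STn n, 0 < z.1 →
        boxD v z = |u z| ^ q + |dtD u z| ^ (((n : ℝ) + 1) / ((n : ℝ) - 1))) ∧
      (∀ x, u (0, x) = ε * f₁ x) ∧ (∀ x, dtD u (0, x) = ε * g₁ x) ∧
      (∀ x, v (0, x) = ε * f₂ x) ∧ (∀ x, dtD v (0, x) = ε * g₂ x) ∧
      (∀ z : STn n, 0 ≤ z.1 → z.1 + 1 < ‖z.2‖ →
        u z = 0 ∧ v z = 0 ∧ dtD u z = 0 ∧ dtD v z = 0) := by
  rintro ⟨u, v, hu, hv, hbu, hbv, -, hut, -, hvt, hs⟩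
  have hn' : (2 : ℝ) ≤ n := by exact_mod_cast hn
  set r : ℝ := ((n : ℝ) + 1) / ((n : ℝ) - 1)
  have hr : ((n : ℝ) - 1) * r = n + 1 := mul_div_cancel₀ _ (by linarith)
  refine blow_up_general (r := r) (R := 1) (by lia) hp hq
    ((one_lt_div (by linarith)).2 (by linarith)) ?_ hu hv (fun z h₀ h => (hs z h₀ h).1)
    (fun z h₀ h => (hs z h₀ h).2.1) (fun z hz => (hbu z hz).ge) (fun z hz => ?_) (fun z hz => ?_)
    ?_ ?_
  · rw [hr]
    linarith
  · rw [hbv z hz]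
    exact le_add_of_nonneg_right (by positivity)
  · rw [hbv z hz]
    exact le_add_of_nonneg_left (by positivity)
  · simpa only [hut, integral_const_mul] using mul_pos hε hg₁pos
  · simpa only [hvt, integral_const_mul] using mul_pos hε hg₂pos
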